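/- Let m be a positive integer divisible by 4, and let v : Z_m → {0,1} be the indicator of {0, m/2}. Let C(v) be the corresponding circulant matrix, let X be the set of rows with even index and Y the set of columns with odd index. Then |X| = |Y| = m/2 and every entry of C(v) in positions X × Y is 0. Consequently, for every ε < 1/2 and every δ > 0, C(v) is not (ε,δ)-balanced. -/

import Mathlib

open Finset

/-- Number of 1-entries (resp. edges) of a 0/1 matrix (resp. bipartite adjacency relation)
`Q` in positions `X × Y`. -/
def ones {α β : Type*} [DecidableEq α] [DecidableEq β]
    (Q : α → β → Bool) (X : Finset α) (Y : Finset β) : ℕ :=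
  ((X ×ˢ Y).filter fun p => Q p.1 p.2).card

/-- The density of `Q` on `X × Y`: the number of 1-entries (edges) in `X × Y`
divided by `|X|·|Y|`. -/
noncomputable def dens {α β : Type*} [DecidableEq α] [DecidableEq β]
    (Q : α → β → Bool) (X : Finset α) (Y : Finset β) : ℝ :=
  (ones Q X Y : ℝ) / ((X.card : ℝ) * (Y.card : ℝ))

/-- A 0/1 matrix `Q` (rows `α`, columns `β`) is `ε`-balanced if for all subsets
`X` of rows and `Y` of columns with `|X| > ε·|A|` and `|Y| > ε·|B|`, the density of `Q`
on `X × Y` differs from the density `d(Q)` of the whole matrix by less than `ε`. -/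
def IsEpsBalanced {α β : Type*} [Fintype α] [Fintype β] [DecidableEq α] [DecidableEq β]
    (ε : ℝ) (Q : α → β → Bool) : Prop :=
  ∀ X : Finset α, ∀ Y : Finset β,
    (X.card : ℝ) > ε * (Fintype.card α : ℝ) → (Y.card : ℝ) > ε * (Fintype.card β : ℝ) →
    |dens Q X Y - dens Q univ univ| < ε

/-- A 0/1 matrix `Q` is `(ε,δ)`-balanced if it is `ε`-balanced, the number of 1-entries
in `X × Y` exceeds `δ·|X|·|Y|` for all `X`, `Y` with `|X| > ε·|A|` and `|Y| > ε·|B|`,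
and every row has more than `δ·|B|` ones and every column more than `δ·|A|` ones. -/
def IsEpsDeltaBalanced {α β : Type*} [Fintype α] [Fintype β] [DecidableEq α] [DecidableEq β]
    (ε δ : ℝ) (Q : α → β → Bool) : Prop :=
  IsEpsBalanced ε Q ∧
  (∀ X : Finset α, ∀ Y : Finset β,
    (X.card : ℝ) > ε * (Fintype.card α : ℝ) → (Y.card : ℝ) > ε * (Fintype.card β : ℝ) →
    (ones Q X Y : ℝ) > δ * (X.card : ℝ) * (Y.card : ℝ)) ∧
  (∀ a : α, (ones Q {a} univ : ℝ) > δ * (Fintype.card β : ℝ)) ∧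
  (∀ b : β, (ones Q univ {b} : ℝ) > δ * (Fintype.card α : ℝ))

/-- The circulant 0/1 matrix of a vector `v : Z_m → {0,1}`:
entry `(i, j)` equals `v (j - i mod m)`. -/
def circ {m : ℕ} (v : Fin m → Bool) : Fin m → Fin m → Bool :=
  fun i j => v (j - i)

/-- Let `m` be a positive integer divisible by 4 and let `v : Z_m → {0,1}` be the
indicator of `{0, m/2}`. Taking `X` to be the even-indexed rows and `Y` the odd-indexed
columns of the circulant `C(v)`, one has `|X| = |Y| = m/2` and every entry of `C(v)` in
positions `X × Y` is `0`. Consequently, for every `ε < 1/2` and every `δ > 0`, `C(v)` is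
not `(ε,δ)`-balanced. -/
theorem two_diagonals_not_eps_delta_balanced {m : ℕ} (hm : 0 < m) (h4 : 4 ∣ m)
    (v : Fin m → Bool) (hv : ∀ k : Fin m, v k = true ↔ ((k : ℕ) = 0 ∨ (k : ℕ) = m / 2)) :
    ∀ X Y : Finset (Fin m),
      X = univ.filter (fun i : Fin m => (i : ℕ) % 2 = 0) →
      Y = univ.filter (fun j : Fin m => (j : ℕ) % 2 = 1) →
      X.card = m / 2 ∧ Y.card = m / 2 ∧
      (∀ i ∈ X, ∀ j ∈ Y, circ v i j = false) ∧
      (∀ ε δ : ℝ, ε < 1 / 2 → 0 < δ → ¬ IsEpsDeltaBalanced ε δ (circ v)) := by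
  intro X Y hX hY
  have hcard : ∀ r : ℕ, r < 2 →
      (univ.filter (fun i : Fin m => (i : ℕ) % 2 = r)).card = m / 2 := by
    intro r hr
    have h := Finset.card_bij' (s := (univ : Finset (Fin (m / 2))))
      (t := univ.filter (fun i : Fin m => (i : ℕ) % 2 = r))
      (fun i _ => ⟨2 * i.1 + r, by have := i.2; omega⟩)
      (fun j _ => ⟨j.1 / 2, by have := j.2; omega⟩)
      (by intro i _; simp only [mem_filter, mem_univ, true_and]; omega)
      (by intro j _; exact mem_univ _)
      (by intro i _; apply Fin.ext; show (2 * i.1 + r) / 2 = i.1; omega)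
      (by
        intro j hj
        have hj2 := (mem_filter.mp hj).2
        apply Fin.ext
        show 2 * (j.1 / 2) + r = j.1
        omega)
    rw [← h, card_univ, Fintype.card_fin]
  have hXc : X.card = m / 2 := by rw [hX]; exact hcard 0 (by norm_num)
  have hYc : Y.card = m / 2 := by rw [hY]; exact hcard 1 (by norm_num)
  have hz : ∀ i ∈ X, ∀ j ∈ Y, circ v i j = false := by
    intro i hi j hj
    rw [hX, mem_filter] at hi
    rw [hY, mem_filter] at hj
    have h1 := hi.2
    have h2 := hj.2
    by_contra hne
    have ht : v (j - i) = true := by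
      simpa [circ] using hne
    rw [hv] at ht
    have hi3 := i.2
    have hj3 := j.2
    rcases le_or_gt i j with hle | hlt
    · rw [Fin.sub_val_of_le hle] at ht
      have : i.1 ≤ j.1 := hle
      omega
    · rw [Fin.coe_sub_iff_lt.mpr hlt] at ht
      have : j.1 < i.1 := hlt
      omega
  refine ⟨hXc, hYc, hz, ?_⟩
  intro ε δ hε hδ hb
  have hmR : (0 : ℝ) < m := by exact_mod_cast hm
  have hhalf : ((m / 2 : ℕ) : ℝ) = (m : ℝ) / 2 := by
    rw [Nat.cast_div (Dvd.dvd.trans (by norm_num) h4) (by norm_num)]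
    norm_num
  have hlt : ((m / 2 : ℕ) : ℝ) > ε * (Fintype.card (Fin m) : ℝ) := by
    rw [hhalf, Fintype.card_fin]
    nlinarith
  have h := hb.2.1 X Y (by rw [hXc]; exact hlt) (by rw [hYc]; exact hlt)
  have h0 : ones (circ v) X Y = 0 := by
    unfold ones
    rw [card_eq_zero, filter_eq_empty_iff]
    intro p hp
    rw [mem_product] at hp
    simp [hz p.1 hp.1 p.2 hp.2]
  rw [h0] at h
  have : (0 : ℝ) ≤ δ * X.card * Y.card := by positivity
  simp only [Nat.cast_zero] at h
  linarith
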